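/- Let H be a quasi-Hopf algebra, B a right H-comodule algebra, and v : H → B a morphism of right H-comodule algebras. Define E : B → B by E(b) = v(q¹)b₍₀₎v(βS(q²b₍₁₎)), set A = E(B), define h▷b = E(v(h)b) for h ∈ H, b ∈ B, and define a*a′ = E(aa′) for a, a′ ∈ A. Then (A, *, 1_B, ▷) is a left H-module algebra, and the map Ψ : A#H → B, Ψ(a#h) = a v(h), is an isomorphism of right H-comodule algebras; in particular B ≅ A#H as right H-comodule algebras. -/

import Mathlib

open TensorProduct BigOperators

/-- A quasi-bialgebra in the sense of Drinfeld. -/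
structure QuasiBialgebra (k H : Type*) [Field k] [Ring H] [Algebra k H] where
  comul : H →ₐ[k] H ⊗[k] H
  counit : H →ₐ[k] k
  Phi : H ⊗[k] (H ⊗[k] H)
  PhiInv : H ⊗[k] (H ⊗[k] H)
  Phi_mul_inv : Phi * PhiInv = 1
  inv_mul_Phi : PhiInv * Phi = 1
  comul_coassoc : ∀ h : H,
    (Algebra.TensorProduct.map (AlgHom.id k H) comul) (comul h)
      = Phi * (Algebra.TensorProduct.assoc k k k H H H)
          ((Algebra.TensorProduct.map comul (AlgHom.id k H)) (comul h)) * PhiInv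
  counit_comul_right : ∀ h : H,
    (Algebra.TensorProduct.map (AlgHom.id k H) counit) (comul h) = h ⊗ₜ[k] (1 : k)
  counit_comul_left : ∀ h : H,
    (Algebra.TensorProduct.map counit (AlgHom.id k H)) (comul h) = (1 : k) ⊗ₜ[k] h
  pentagon :
    ((1 : H) ⊗ₜ[k] Phi)
      * (Algebra.TensorProduct.map (AlgHom.id k H)
          (((Algebra.TensorProduct.assoc k k k H H H).toAlgHom).comp
            (Algebra.TensorProduct.map comul (AlgHom.id k H)))) Phi
      * (Algebra.TensorProduct.map (AlgHom.id k H)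
          (Algebra.TensorProduct.map (AlgHom.id k H)
            (Algebra.TensorProduct.includeLeft : H →ₐ[k] H ⊗[k] H))) Phi
    = (Algebra.TensorProduct.map (AlgHom.id k H)
          (Algebra.TensorProduct.map (AlgHom.id k H) comul)) Phi
      * (Algebra.TensorProduct.assoc k k k H H (H ⊗[k] H))
          ((Algebra.TensorProduct.map comul (AlgHom.id k (H ⊗[k] H))) Phi)
  counit_Phi : (Algebra.TensorProduct.map (AlgHom.id k H)
      (Algebra.TensorProduct.map counit (AlgHom.id k H))) Phi = 1

/-- A quasi-Hopf algebra: a quasi-bialgebra with antipode `S` (a bijective algebra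
anti-automorphism with inverse `Sinv`) and elements `alpha`, `beta`, normalized so that
`counit alpha = counit beta = 1`.  Identities involving Sweedler components are stated
universally over all finite representations of the relevant tensors. -/
structure QuasiHopfAlgebra (k H : Type*) [Field k] [Ring H] [Algebra k H] extends
    QuasiBialgebra k H where
  alpha : H
  beta : H
  S : H →ₗ[k] H
  Sinv : H →ₗ[k] H
  S_one : S 1 = 1
  S_mul : ∀ a b : H, S (a * b) = S b * S a
  Sinv_S : ∀ h : H, Sinv (S h) = h
  S_Sinv : ∀ h : H, S (Sinv h) = h
  antipode_left : ∀ h : H, ∀ (n : ℕ) (d1 d2 : Fin n → H),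
    comul h = ∑ i, d1 i ⊗ₜ[k] d2 i →
    ∑ i, S (d1 i) * alpha * d2 i = counit h • alpha
  antipode_right : ∀ h : H, ∀ (n : ℕ) (d1 d2 : Fin n → H),
    comul h = ∑ i, d1 i ⊗ₜ[k] d2 i →
    ∑ i, d1 i * beta * S (d2 i) = counit h • beta
  antipode_Phi : ∀ (n : ℕ) (X1 X2 X3 : Fin n → H),
    Phi = ∑ i, X1 i ⊗ₜ[k] (X2 i ⊗ₜ[k] X3 i) →
    ∑ i, X1 i * beta * S (X2 i) * alpha * X3 i = 1
  antipode_PhiInv : ∀ (n : ℕ) (x1 x2 x3 : Fin n → H),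
    PhiInv = ∑ i, x1 i ⊗ₜ[k] (x2 i ⊗ₜ[k] x3 i) →
    ∑ i, S (x1 i) * alpha * x2 i * beta * S (x3 i) = 1
  counit_alpha : counit alpha = 1
  counit_beta : counit beta = 1
/-- A right `H`-comodule algebra over a quasi-bialgebra `Q`. -/
structure RightComoduleAlgebra {k H : Type*} [Field k] [Ring H] [Algebra k H]
    (Q : QuasiBialgebra k H) (B : Type*) [Ring B] [Algebra k B] where
  coact : B →ₐ[k] B ⊗[k] H
  PhiRho : B ⊗[k] (H ⊗[k] H)
  PhiRhoInv : B ⊗[k] (H ⊗[k] H)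
  PhiRho_mul_inv : PhiRho * PhiRhoInv = 1
  inv_mul_PhiRho : PhiRhoInv * PhiRho = 1
  coact_coassoc : ∀ b : B,
    PhiRho * (Algebra.TensorProduct.assoc k k k B H H)
        ((Algebra.TensorProduct.map coact (AlgHom.id k H)) (coact b))
      = (Algebra.TensorProduct.map (AlgHom.id k B) Q.comul) (coact b) * PhiRho
  pentagon :
    ((1 : B) ⊗ₜ[k] Q.Phi)
      * (Algebra.TensorProduct.map (AlgHom.id k B)
          (((Algebra.TensorProduct.assoc k k k H H H).toAlgHom).comp
            (Algebra.TensorProduct.map Q.comul (AlgHom.id k H)))) PhiRho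
      * (Algebra.TensorProduct.map (AlgHom.id k B)
          (Algebra.TensorProduct.map (AlgHom.id k H)
            (Algebra.TensorProduct.includeLeft : H →ₐ[k] H ⊗[k] H))) PhiRho
    = (Algebra.TensorProduct.map (AlgHom.id k B)
          (Algebra.TensorProduct.map (AlgHom.id k H) Q.comul)) PhiRho
      * (Algebra.TensorProduct.assoc k k k B H (H ⊗[k] H))
          ((Algebra.TensorProduct.map coact (AlgHom.id k (H ⊗[k] H))) PhiRho)
  counit_coact : ∀ b : B,
    (Algebra.TensorProduct.map (AlgHom.id k B) Q.counit) (coact b) = b ⊗ₜ[k] (1 : k)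
  counit_PhiRho_mid : (Algebra.TensorProduct.map (AlgHom.id k B)
      (Algebra.TensorProduct.map Q.counit (AlgHom.id k H))) PhiRho = 1
  counit_PhiRho_right : (Algebra.TensorProduct.map (AlgHom.id k B)
      (Algebra.TensorProduct.map (AlgHom.id k H) Q.counit)) PhiRho = 1

/-- `v : H → B` is a morphism of right `H`-comodule algebras from `H` (with its canonical
right `H`-comodule algebra structure `ρ = Δ`, `Φ_ρ = Φ`) to `B`. -/
def IsComodAlgMorphismFromH {k H B : Type*} [Field k] [Ring H] [Algebra k H]
    [Ring B] [Algebra k B] {Q : QuasiBialgebra k H}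
    (R : RightComoduleAlgebra Q B) (v : H →ₐ[k] B) : Prop :=
  (∀ h : H, R.coact (v h) = (Algebra.TensorProduct.map v (AlgHom.id k H)) (Q.comul h))
  ∧ R.PhiRho = (Algebra.TensorProduct.map v (AlgHom.id k (H ⊗[k] H))) Q.Phi

/-- Characterization of the canonical projection `E : B → B`,
`E(b) = v(q¹) b₍₀₎ v(β S(q² b₍₁₎))`, where `q_R = q¹ ⊗ q² = X¹ ⊗ S⁻¹(α X³) X²`,
stated universally over finite representations of `Φ` and of `ρ(b)`. -/
def IsCanonicalProjection {k H B : Type*} [Field k] [Ring H] [Algebra k H]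
    [Ring B] [Algebra k B] (Q : QuasiHopfAlgebra k H)
    (R : RightComoduleAlgebra Q.toQuasiBialgebra B) (v : H →ₐ[k] B) (E : B →ₗ[k] B) : Prop :=
  ∀ (b : B) (n : ℕ) (X1 X2 X3 : Fin n → H),
    Q.Phi = ∑ i, X1 i ⊗ₜ[k] (X2 i ⊗ₜ[k] X3 i) →
    ∀ (p : ℕ) (b0 : Fin p → B) (b1 : Fin p → H),
      R.coact b = ∑ j, b0 j ⊗ₜ[k] b1 j →
      E b = ∑ i, ∑ j,
        v (X1 i) * b0 j * v (Q.beta * Q.S (Q.Sinv (Q.alpha * X3 i) * X2 i * b1 j))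

/-- The map `Ψ : A ⊗ H → B`, `Ψ(a ⊗ h) = a v(h)`, where `A = E(B)` is the range of the
canonical projection `E`. -/
noncomputable def smashToB {k H B : Type*} [Field k] [Ring H] [Algebra k H]
    [Ring B] [Algebra k B] (E : B →ₗ[k] B) (v : H →ₐ[k] B) :
    (↥(LinearMap.range E)) ⊗[k] H →ₗ[k] B :=
  TensorProduct.lift
    (LinearMap.mk₂ k (fun (a : ↥(LinearMap.range E)) (h : H) => (a : B) * v h)
      (fun a a' h => by simp [add_mul])
      (fun c a h => by simp [smul_mul_assoc])
      (fun a h h' => by simp [mul_add])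
      (fun c a h => by simp [mul_smul_comm]))


/-!
Writing `κ(b ⊗ c ⊗ d) = b v(β S(c) α d)`, the projection is `E(b) = κ(Φ_ρ (ρ(b) ⊗ 1))`, and it is
right invariant: `E(b v(h)) = ε(h) E(b)`. A right invariant map `f` does not see factors `v(h)`
beyond their counits, so `f(E(m)) = f(m)`; contracting the last three factors of the pentagon for
`Φ_ρ` with `κ` moreover gives `f(E(m)₍₀₎) ⊗ E(m)₍₁₎ = f(m) ⊗ 1`. In the other direction,
quasi-coassociativity of `ρ` gives `b E(m) = E(b₍₀₎ m) v(b₍₁₎)`, in particular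
`b = E(b₍₀₎) v(b₍₁₎)`. Hence `b ↦ E(b₍₀₎) ⊗ b₍₁₎` is inverse to `Ψ`, and applying `ρ` to the last
formula yields `ρ(a) = E(v(x¹)a) v(x²) ⊗ x³` for `a ∈ A`. Together with `b E(m) = E(b₍₀₎ m) v(b₍₁₎)`
this turns every product into star products, which gives the remaining identities.
-/

section TensorProduct

variable {k A B C D M N P : Type*} [CommSemiring k] [Semiring A] [Algebra k A] [Semiring B]
  [Algebra k B] [Semiring C] [Algebra k C] [Semiring D] [Algebra k D]

theorem exists_sum_tmul_tmul_eq [AddCommMonoid M] [Module k M] [AddCommMonoid N] [Module k N]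
    [AddCommMonoid P] [Module k P] (t : M ⊗[k] (N ⊗[k] P)) :
    ∃ (n : ℕ) (x : Fin n → M) (y : Fin n → N) (z : Fin n → P),
      t = ∑ i, x i ⊗ₜ[k] (y i ⊗ₜ[k] z i) := by
  induction t with
  | zero => exact ⟨0, 0, 0, 0, by simp⟩
  | tmul x w =>
    obtain ⟨n, y, z, rfl⟩ := TensorProduct.exists_sum_tmul_eq w
    exact ⟨n, fun _ => x, y, z, TensorProduct.tmul_sum ..⟩
  | add s t hs ht =>
    obtain ⟨n, x, y, z, rfl⟩ := hs
    obtain ⟨m, x', y', z', rfl⟩ := ht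
    exact ⟨n + m, Fin.append x x', Fin.append y y', Fin.append z z', by simp [Fin.sum_univ_add]⟩

/-- The map `a ⊗ c ↦ a ⊗ c ⊗ 1`. -/
noncomputable def appendOne : A ⊗[k] C →ₐ[k] A ⊗[k] (C ⊗[k] D) :=
  Algebra.TensorProduct.map (AlgHom.id k A) Algebra.TensorProduct.includeLeft

@[simp]
theorem appendOne_tmul (a : A) (c : C) :
    appendOne (D := D) (a ⊗ₜ[k] c) = a ⊗ₜ[k] (c ⊗ₜ[k] 1) := by
  simp [appendOne]

/-- The map `ρ ⊗ id`, reassociated so that it lands in right-nested tensors. -/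
noncomputable def coactLeft (ρ : B →ₐ[k] B ⊗[k] C) : B ⊗[k] A →ₐ[k] B ⊗[k] (C ⊗[k] A) :=
  (Algebra.TensorProduct.assoc k k k B C A).toAlgHom.comp
    (Algebra.TensorProduct.map ρ (AlgHom.id k A))

theorem coactLeft_tmul (ρ : B →ₐ[k] B ⊗[k] C) (b : B) (a : A) :
    coactLeft ρ (b ⊗ₜ[k] a) = TensorProduct.assoc k B C A (ρ b ⊗ₜ[k] a) :=
  rfl

theorem assoc_tmul_eq_appendOne_mul (s : A ⊗[k] C) (d : D) :
    TensorProduct.assoc k A C D (s ⊗ₜ[k] d) = appendOne s * (1 ⊗ₜ[k] (1 ⊗ₜ[k] d)) := by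
  induction s with
  | zero => simp
  | add x y hx hy => simp only [TensorProduct.add_tmul, map_add, add_mul, hx, hy]
  | tmul a c => simp

theorem coactLeft_tmul_one (ρ : B →ₐ[k] B ⊗[k] C) (b : B) :
    coactLeft ρ (b ⊗ₜ[k] (1 : A)) = appendOne (ρ b) := by
  rw [coactLeft_tmul, assoc_tmul_eq_appendOne_mul, ← Algebra.TensorProduct.one_def,
    ← Algebra.TensorProduct.one_def, mul_one]

theorem coactLeft_appendOne (ρ : B →ₐ[k] B ⊗[k] C) (s : B ⊗[k] A) :
    coactLeft ρ (appendOne (D := D) s) =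
      Algebra.TensorProduct.map (AlgHom.id k B) appendOne (coactLeft ρ s) := by
  induction s with
  | zero => simp
  | add x y hx hy => simp only [map_add, hx, hy]
  | tmul b a =>
    rw [appendOne_tmul, coactLeft_tmul, coactLeft_tmul]
    induction ρ b with
    | zero => simp
    | add x y hx hy => simp only [TensorProduct.add_tmul, map_add, hx, hy]
    | tmul b' c => simp

theorem rTensor_coactLeft [AddCommMonoid M] [Module k M] (f : B →ₗ[k] M) (ρ : B →ₐ[k] B ⊗[k] C)
    (s : B ⊗[k] A) :
    f.rTensor (C ⊗[k] A) (coactLeft ρ s) =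
      TensorProduct.assoc k M C A ((f.rTensor C ∘ₗ ρ.toLinearMap).rTensor A s) := by
  induction s with
  | zero => simp
  | add x y hx hy => simp only [map_add, hx, hy]
  | tmul b a =>
    rw [coactLeft_tmul, LinearMap.rTensor_tmul, LinearMap.comp_apply, AlgHom.toLinearMap_apply]
    induction ρ b with
    | zero => simp
    | add x y hx hy => simp only [TensorProduct.add_tmul, map_add, hx, hy]
    | tmul b' c => simp

theorem rTensor_mul_one_tmul [AddCommMonoid M] [Module k M] (f : B →ₗ[k] M) (t : B ⊗[k] A)
    (a : A) :
    f.rTensor A (t * (1 ⊗ₜ[k] a)) = (LinearMap.mulRight k a).lTensor M (f.rTensor A t) := by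
  induction t with
  | zero => simp
  | add x y hx hy => simp only [add_mul, map_add, hx, hy]
  | tmul b a' => simp

theorem lTensor_map_mul [Semiring M] [Algebra k M] {f : C →ₗ[k] M} {φ : A →ₐ[k] C}
    {ψ : A →ₐ[k] M} (hf : ∀ a c, f (φ a * c) = ψ a * f c) (z : B ⊗[k] A) (t : B ⊗[k] C) :
    f.lTensor B (Algebra.TensorProduct.map (AlgHom.id k B) φ z * t) =
      Algebra.TensorProduct.map (AlgHom.id k B) ψ z * f.lTensor B t := by
  induction z with
  | zero => simp
  | add x y hx hy => simp only [map_add, add_mul, hx, hy]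
  | tmul b a =>
    induction t with
    | zero => simp
    | add x y hx hy => simp only [map_add, mul_add, hx, hy]
    | tmul b' c => simp [hf]

theorem lTensor_mul_map [Semiring M] [Algebra k M] {f : C →ₗ[k] M} {φ : A →ₐ[k] C}
    {ψ : A →ₐ[k] M} (hf : ∀ c a, f (c * φ a) = f c * ψ a) (t : B ⊗[k] C) (z : B ⊗[k] A) :
    f.lTensor B (t * Algebra.TensorProduct.map (AlgHom.id k B) φ z) =
      f.lTensor B t * Algebra.TensorProduct.map (AlgHom.id k B) ψ z := by
  induction z with
  | zero => simp
  | add x y hx hy => simp only [map_add, mul_add, hx, hy]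
  | tmul b a =>
    induction t with
    | zero => simp
    | add x y hx hy => simp only [map_add, add_mul, hx, hy]
    | tmul b' c => simp [hf]

end TensorProduct

namespace QuasiBialgebra

variable {k H A B C : Type*} [Field k] [Ring H] [Algebra k H] [Ring A] [Algebra k A]
  [Ring B] [Algebra k B] [Ring C] [Algebra k C] (Q : QuasiBialgebra k H)

/-- The map `ε ⊗ id : H ⊗ A → A`. -/
noncomputable def counitLeft : H ⊗[k] A →ₐ[k] A :=
  (Algebra.TensorProduct.lid k A).toAlgHom.comp
    (Algebra.TensorProduct.map Q.counit (AlgHom.id k A))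

@[simp]
theorem counitLeft_tmul (h : H) (a : A) : Q.counitLeft (h ⊗ₜ[k] a) = Q.counit h • a := by
  simp [counitLeft]

/-- The map `id ⊗ ε : A ⊗ H → A`. -/
noncomputable def counitRight : A ⊗[k] H →ₐ[k] A :=
  (Algebra.TensorProduct.rid k k A).toAlgHom.comp
    (Algebra.TensorProduct.map (AlgHom.id k A) Q.counit)

@[simp]
theorem counitRight_tmul (a : A) (h : H) : Q.counitRight (a ⊗ₜ[k] h) = Q.counit h • a := by
  simp [counitRight]

/-- The map `id ⊗ Δ : A ⊗ H → A ⊗ H ⊗ H`. -/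
noncomputable def comulRight : A ⊗[k] H →ₐ[k] A ⊗[k] (H ⊗[k] H) :=
  Algebra.TensorProduct.map (AlgHom.id k A) Q.comul

@[simp]
theorem comulRight_tmul (a : A) (h : H) : Q.comulRight (a ⊗ₜ[k] h) = a ⊗ₜ[k] Q.comul h := by
  simp [comulRight]

theorem counitLeft_comul (h : H) : Q.counitLeft (Q.comul h) = h := by
  simp [counitLeft, Q.counit_comul_left]

theorem counitRight_comul (h : H) : Q.counitRight (Q.comul h) = h := by
  simp [counitRight, Q.counit_comul_right]

theorem counitLeft_comp_map (f : A →ₐ[k] C) :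
    Q.counitLeft.comp (Algebra.TensorProduct.map (AlgHom.id k H) f) = f.comp Q.counitLeft := by
  ext <;> simp

theorem counitLeft_coactLeft_comul (s : H ⊗[k] A) :
    Q.counitLeft (coactLeft Q.comul s) = s := by
  induction s with
  | zero => simp
  | add x y hx hy => simp only [map_add, hx, hy]
  | tmul h a =>
    have counitLeft_assoc (x : H ⊗[k] H) :
        Q.counitLeft (TensorProduct.assoc k H H A (x ⊗ₜ a)) = Q.counitLeft x ⊗ₜ[k] a := by
      induction x with
      | zero => simp
      | add x y hx hy => simp only [TensorProduct.add_tmul, map_add, hx, hy]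
      | tmul g g' => simp [TensorProduct.smul_tmul']
    rw [coactLeft_tmul, counitLeft_assoc, counitLeft_comul]

theorem map_counitLeft_coactLeft {ρ : B →ₐ[k] B ⊗[k] H} (hρ : ∀ b, Q.counitRight (ρ b) = b)
    (t : B ⊗[k] A) :
    Algebra.TensorProduct.map (AlgHom.id k B) Q.counitLeft (coactLeft ρ t) = t := by
  induction t with
  | zero => simp
  | add x y hx hy => simp only [map_add, hx, hy]
  | tmul b a =>
    have map_counitLeft_assoc (x : B ⊗[k] H) :
        Algebra.TensorProduct.map (AlgHom.id k B) Q.counitLeft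
          (TensorProduct.assoc k B H A (x ⊗ₜ a)) = Q.counitRight x ⊗ₜ[k] a := by
      induction x with
      | zero => simp
      | add x y hx hy => simp only [TensorProduct.add_tmul, map_add, hx, hy]
      | tmul g g' => simp [TensorProduct.smul_tmul']
    rw [coactLeft_tmul, map_counitLeft_assoc, hρ]

theorem map_counitLeft_Phi :
    Algebra.TensorProduct.map (AlgHom.id k H) Q.counitLeft Q.Phi = 1 := by
  rw [counitLeft, ← AlgHom.id_comp (AlgHom.id k H), Algebra.TensorProduct.map_comp,
    AlgHom.comp_apply, AlgHom.id_comp, Q.counit_Phi, map_one]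

theorem map_counitLeft_map_map_Phi (f : H →ₐ[k] C) :
    Algebra.TensorProduct.map (AlgHom.id k H) Q.counitLeft
      (Algebra.TensorProduct.map (AlgHom.id k H)
        (Algebra.TensorProduct.map (AlgHom.id k H) f) Q.Phi) = 1 := by
  rw [← AlgHom.comp_apply, ← Algebra.TensorProduct.map_comp, counitLeft_comp_map,
    Algebra.TensorProduct.map_comp, AlgHom.comp_apply, map_counitLeft_Phi, map_one]

theorem map_counitLeft_map_coactLeft_Phi :
    Algebra.TensorProduct.map (AlgHom.id k H) Q.counitLeft
      (Algebra.TensorProduct.map (AlgHom.id k H) (coactLeft Q.comul) Q.Phi) = Q.Phi := by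
  have counitLeft_comp_coactLeft :
      Q.counitLeft.comp (coactLeft (A := H) Q.comul) = AlgHom.id k (H ⊗[k] H) :=
    AlgHom.ext Q.counitLeft_coactLeft_comul
  rw [← AlgHom.comp_apply, ← Algebra.TensorProduct.map_comp, counitLeft_comp_coactLeft,
    AlgHom.comp_id, Algebra.TensorProduct.map_id, AlgHom.id_apply]

theorem pentagon_coactLeft :
    (1 ⊗ₜ[k] Q.Phi) * Algebra.TensorProduct.map (AlgHom.id k H) (coactLeft Q.comul) Q.Phi *
        Algebra.TensorProduct.map (AlgHom.id k H) appendOne Q.Phi =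
      Algebra.TensorProduct.map (AlgHom.id k H) Q.comulRight Q.Phi *
        coactLeft Q.comul Q.Phi :=
  Q.pentagon

-- Applying the counit to the second factor of the pentagon leaves `(1 ⊗ (ε ⊗ id ⊗ id)(Φ)) Φ = Φ`.
theorem counitLeft_Phi : Q.counitLeft Q.Phi = 1 := by
  have one_tmul_mul_Phi : (1 ⊗ₜ[k] Q.counitLeft Q.Phi) * Q.Phi = Q.Phi := by
    have h := congrArg (Algebra.TensorProduct.map (AlgHom.id k H) Q.counitLeft)
      Q.pentagon_coactLeft
    simpa only [map_mul, Algebra.TensorProduct.map_tmul, AlgHom.id_apply, appendOne, comulRight,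
      Q.map_counitLeft_map_coactLeft_Phi, Q.map_counitLeft_map_map_Phi, mul_one, one_mul,
      Q.map_counitLeft_coactLeft Q.counitRight_comul] using h
  have one_tmul_eq_one : (1 : H) ⊗ₜ[k] Q.counitLeft Q.Phi = 1 := by
    rw [← mul_one (1 ⊗ₜ[k] _), ← Q.Phi_mul_inv, ← mul_assoc, one_tmul_mul_Phi]
  simpa using congrArg Q.counitLeft one_tmul_eq_one

end QuasiBialgebra

/-- The right action `b ⊗ h ↦ b v(h)` of `H` on `B` through `v`. -/
noncomputable def actRight {k H B : Type*} [CommSemiring k] [Semiring H] [Algebra k H]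
    [Semiring B] [Algebra k B] (v : H →ₐ[k] B) : B ⊗[k] H →ₗ[k] B :=
  LinearMap.mul' k B ∘ₗ v.toLinearMap.lTensor B

@[simp]
theorem actRight_tmul {k H B : Type*} [CommSemiring k] [Semiring H] [Algebra k H]
    [Semiring B] [Algebra k B] (v : H →ₐ[k] B) (b : B) (h : H) :
    actRight v (b ⊗ₜ[k] h) = b * v h :=
  rfl

theorem smashToB_eq_actRight {k H B : Type*} [Field k] [Ring H] [Algebra k H] [Ring B]
    [Algebra k B] (E : B →ₗ[k] B) (v : H →ₐ[k] B) (s : LinearMap.range E ⊗[k] H) :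
    smashToB E v s = actRight v ((LinearMap.range E).subtype.rTensor H s) := by
  induction s with
  | zero => simp
  | add x y hx hy => simp only [map_add, hx, hy]
  | tmul a h => rfl

namespace QuasiHopfAlgebra

variable {k H B : Type*} [Field k] [Ring H] [Algebra k H] [Ring B] [Algebra k B]
  (Q : QuasiHopfAlgebra k H) (v : H →ₐ[k] B)

theorem counit_S (h : H) : Q.counit (Q.S h) = Q.counit h := by
  obtain ⟨n, d₁, d₂, hd⟩ := TensorProduct.exists_sum_tmul_eq (Q.comul h)
  have sum_counit_smul : ∑ i, Q.counit (d₂ i) • d₁ i = h := by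
    simpa [hd] using Q.counitRight_comul h
  calc Q.counit (Q.S h) = Q.counit (∑ i, Q.S (d₁ i) * Q.alpha * d₂ i) := by
        rw [← sum_counit_smul]
        simp [Q.counit_alpha, mul_comm]
    _ = Q.counit h := by simp [Q.antipode_left h n d₁ d₂ hd, Q.counit_alpha]

/-- The map `c ⊗ d ↦ β S(c) α d`. -/
noncomputable def antipodePairing : H ⊗[k] H →ₗ[k] H :=
  LinearMap.mul' k H ∘ₗ
    (LinearMap.mulLeft k Q.beta ∘ₗ LinearMap.mulRight k Q.alpha ∘ₗ Q.S).rTensor H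

@[simp]
theorem antipodePairing_tmul (c d : H) :
    Q.antipodePairing (c ⊗ₜ[k] d) = Q.beta * (Q.S c * Q.alpha) * d :=
  rfl

theorem counit_antipodePairing (s : H ⊗[k] H) :
    Q.counit (Q.antipodePairing s) = Q.counit (Q.counitRight s) := by
  induction s with
  | zero => simp
  | add x y hx hy => simp only [map_add, hx, hy]
  | tmul c d => simp [Q.counit_alpha, Q.counit_beta, counit_S, mul_comm]

theorem antipodePairing_comul_mul (h : H) (s : H ⊗[k] H) :
    Q.antipodePairing (Q.comul h * s) = Q.counit h • Q.antipodePairing s := by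
  obtain ⟨n, d₁, d₂, hd⟩ := TensorProduct.exists_sum_tmul_eq (Q.comul h)
  induction s with
  | zero => simp
  | add x y hx hy => simp only [mul_add, map_add, hx, hy, smul_add]
  | tmul c d =>
    calc Q.antipodePairing (Q.comul h * c ⊗ₜ[k] d)
        = Q.beta * Q.S c * (∑ i, Q.S (d₁ i) * Q.alpha * d₂ i) * d := by
          simp [hd, Finset.sum_mul, Finset.mul_sum, Q.S_mul, mul_assoc]
      _ = Q.counit h • Q.antipodePairing (c ⊗ₜ[k] d) := by
          rw [Q.antipode_left h n d₁ d₂ hd]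
          simp [mul_assoc]

/-- The map `b ⊗ c ⊗ d ↦ b v(β S(c) α d)`; the canonical projection is obtained by applying it to
`Φ_ρ (ρ(b) ⊗ 1)`. -/
noncomputable def contract : B ⊗[k] (H ⊗[k] H) →ₗ[k] B :=
  actRight v ∘ₗ Q.antipodePairing.lTensor B

@[simp]
theorem contract_tmul (b : B) (s : H ⊗[k] H) :
    Q.contract v (b ⊗ₜ[k] s) = b * v (Q.antipodePairing s) :=
  rfl

theorem contract_comulRight_mul (s : B ⊗[k] H) (t : B ⊗[k] (H ⊗[k] H)) :
    Q.contract v (Q.comulRight s * t) = Q.counitRight s * Q.contract v t := by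
  induction s with
  | zero => simp
  | add x y hx hy => simp only [map_add, add_mul, hx, hy]
  | tmul b h =>
    induction t with
    | zero => simp
    | add x y hx hy => simp only [map_add, mul_add, hx, hy]
    | tmul b' s => simp [antipodePairing_comul_mul, mul_assoc]

theorem contract_mul_coactLeft_comul (t : B ⊗[k] (H ⊗[k] H)) (s : H ⊗[k] H) :
    Q.contract v (t * Algebra.TensorProduct.map v (AlgHom.id k _) (coactLeft Q.comul s)) =
      Q.contract v t * v (Q.counitLeft s) := by
  obtain ⟨n, b, c, d, rfl⟩ := exists_sum_tmul_tmul_eq t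
  simp only [Finset.sum_mul, map_sum]
  refine Finset.sum_congr rfl fun i _ => ?_
  induction s with
  | zero => simp
  | add x y hx hy => simp only [map_add, mul_add, hx, hy]
  | tmul h e =>
    obtain ⟨n, d₁, d₂, hd⟩ := TensorProduct.exists_sum_tmul_eq (Q.comul h)
    calc _ = b i * v ((∑ j, d₁ j * Q.beta * Q.S (d₂ j)) * (Q.S (c i) * Q.alpha * (d i * e))) := by
          simp [coactLeft_tmul, hd, TensorProduct.sum_tmul, Finset.sum_mul, Finset.mul_sum,
            Q.S_mul, mul_assoc]
      _ = _ := by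
          rw [Q.antipode_right h n d₁ d₂ hd]
          simp [mul_assoc]

theorem contract_mul_map_comul_appendOne (t : B ⊗[k] (H ⊗[k] H)) (h : H) :
    Q.contract v (t * appendOne (Algebra.TensorProduct.map v (AlgHom.id k H) (Q.comul h))) =
      Q.counit h • Q.contract v t := by
  have h' := Q.contract_mul_coactLeft_comul v t (h ⊗ₜ[k] 1)
  have map_appendOne : (Algebra.TensorProduct.map v (AlgHom.id k (H ⊗[k] H))).comp appendOne =
      appendOne.comp (Algebra.TensorProduct.map v (AlgHom.id k H)) := by
    ext <;> simp
  rwa [coactLeft_tmul_one, ← AlgHom.comp_apply, map_appendOne, AlgHom.comp_apply,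
    Q.counitLeft_tmul, map_smul, map_one, mul_smul_comm, mul_one] at h'

theorem contract_mul_one_tmul_one_tmul (t : B ⊗[k] (H ⊗[k] H)) (h : H) :
    Q.contract v (t * (1 ⊗ₜ[k] (1 ⊗ₜ[k] h))) = Q.contract v t * v h := by
  have h' := Q.contract_mul_coactLeft_comul v t (1 ⊗ₜ[k] h)
  simpa [coactLeft_tmul, Algebra.TensorProduct.one_def] using h'

theorem contract_map_Phi :
    Q.contract v (Algebra.TensorProduct.map v (AlgHom.id k _) Q.Phi) = 1 := by
  obtain ⟨n, X₁, X₂, X₃, hX⟩ := exists_sum_tmul_tmul_eq Q.Phi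
  calc _ = v (∑ i, X₁ i * Q.beta * Q.S (X₂ i) * Q.alpha * X₃ i) := by simp [hX, mul_assoc]
    _ = 1 := by rw [Q.antipode_Phi n X₁ X₂ X₃ hX, map_one]

theorem contract_id_mul_coactLeft_comul (t : H ⊗[k] (H ⊗[k] H)) (s : H ⊗[k] H) :
    Q.contract (AlgHom.id k H) (t * coactLeft Q.comul s) =
      Q.contract (AlgHom.id k H) t * Q.counitLeft s := by
  simpa using Q.contract_mul_coactLeft_comul (AlgHom.id k H) t s

theorem contract_id_Phi : Q.contract (AlgHom.id k H) Q.Phi = 1 := by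
  simpa using Q.contract_map_Phi (AlgHom.id k H)

theorem lTensor_contract_mul_appendOne_comulRight
    (t : B ⊗[k] (H ⊗[k] (H ⊗[k] H))) (s : B ⊗[k] H) :
    (Q.contract (AlgHom.id k H)).lTensor B
        (t * Algebra.TensorProduct.map (AlgHom.id k B) appendOne (Q.comulRight s)) =
      (Q.contract (AlgHom.id k H)).lTensor B t * (Q.counitRight s ⊗ₜ[k] 1) := by
  have contract_mul_appendOne_comul (c : H ⊗[k] (H ⊗[k] H)) (h : H) :
      Q.contract (AlgHom.id k H) (c * appendOne.comp Q.comul h) =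
        Q.contract (AlgHom.id k H) c * (Algebra.ofId k H).comp Q.counit h := by
    rw [AlgHom.comp_apply, ← coactLeft_tmul_one, Q.contract_id_mul_coactLeft_comul]
    simp [Algebra.ofId_apply, Algebra.algebraMap_eq_smul_one]
  have map_counit (s : B ⊗[k] H) :
      Algebra.TensorProduct.map (AlgHom.id k B) ((Algebra.ofId k H).comp Q.counit) s =
        Q.counitRight s ⊗ₜ[k] 1 := by
    induction s with
    | zero => simp
    | add x y hx hy => simp only [map_add, TensorProduct.add_tmul, hx, hy]
    | tmul b h =>
      simp [Algebra.ofId_apply, Algebra.algebraMap_eq_smul_one, TensorProduct.smul_tmul]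
  rw [QuasiBialgebra.comulRight, ← AlgHom.comp_apply, ← Algebra.TensorProduct.map_comp,
    AlgHom.id_comp, lTensor_mul_map contract_mul_appendOne_comul, map_counit]

end QuasiHopfAlgebra

namespace RightComoduleAlgebra

variable {k H B : Type*} [Field k] [Ring H] [Algebra k H] [Ring B] [Algebra k B]

section QuasiBialgebra

variable {Q : QuasiBialgebra k H} (R : RightComoduleAlgebra Q B)

theorem counitRight_coact (b : B) : Q.counitRight (R.coact b) = b := by
  simp [QuasiBialgebra.counitRight, R.counit_coact]

theorem PhiRho_mul_coactLeft_coact (b : B) :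
    R.PhiRho * coactLeft R.coact (R.coact b) = Q.comulRight (R.coact b) * R.PhiRho :=
  R.coact_coassoc b

theorem coactLeft_coact (b : B) :
    coactLeft R.coact (R.coact b) = R.PhiRhoInv * Q.comulRight (R.coact b) * R.PhiRho := by
  rw [mul_assoc, ← R.PhiRho_mul_coactLeft_coact, ← mul_assoc, R.inv_mul_PhiRho, one_mul]

theorem coactLeft_PhiRho_mul_appendOne_coact (b : B) :
    coactLeft R.coact (R.PhiRho * appendOne (R.coact b)) =
      coactLeft R.coact R.PhiRho *
        Algebra.TensorProduct.map (AlgHom.id k B) appendOne R.PhiRhoInv *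
        Algebra.TensorProduct.map (AlgHom.id k B) appendOne (Q.comulRight (R.coact b)) *
        Algebra.TensorProduct.map (AlgHom.id k B) appendOne R.PhiRho := by
  simp only [map_mul, coactLeft_appendOne, R.coactLeft_coact, mul_assoc]

theorem map_counitLeft_PhiRho :
    Algebra.TensorProduct.map (AlgHom.id k B) Q.counitLeft R.PhiRho = 1 := by
  rw [QuasiBialgebra.counitLeft, ← AlgHom.id_comp (AlgHom.id k B), Algebra.TensorProduct.map_comp,
    AlgHom.comp_apply, R.counit_PhiRho_mid, map_one]

theorem map_counitRight_PhiRho :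
    Algebra.TensorProduct.map (AlgHom.id k B) Q.counitRight R.PhiRho = 1 := by
  rw [QuasiBialgebra.counitRight, ← AlgHom.id_comp (AlgHom.id k B), Algebra.TensorProduct.map_comp,
    AlgHom.comp_apply, R.counit_PhiRho_right, map_one]

theorem pentagon_coactLeft :
    (1 ⊗ₜ[k] Q.Phi) * Algebra.TensorProduct.map (AlgHom.id k B) (coactLeft Q.comul) R.PhiRho *
        Algebra.TensorProduct.map (AlgHom.id k B) appendOne R.PhiRho =
      Algebra.TensorProduct.map (AlgHom.id k B) Q.comulRight R.PhiRho *
        coactLeft R.coact R.PhiRho :=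
  R.pentagon

end QuasiBialgebra

variable {Q : QuasiHopfAlgebra k H} (R : RightComoduleAlgebra Q.toQuasiBialgebra B)

-- Contracting the last three factors of the pentagon turns its outer terms into counits of `Φ_ρ`.
theorem lTensor_contract_coactLeft_PhiRho_mul_PhiRhoInv :
    (Q.contract (AlgHom.id k H)).lTensor B (coactLeft R.coact R.PhiRho *
      Algebra.TensorProduct.map (AlgHom.id k B) appendOne R.PhiRhoInv) = 1 := by
  have pentagon_div :
      (1 ⊗ₜ[k] Q.Phi) * Algebra.TensorProduct.map (AlgHom.id k B) (coactLeft Q.comul) R.PhiRho =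
      Algebra.TensorProduct.map (AlgHom.id k B) Q.comulRight R.PhiRho *
        (coactLeft R.coact R.PhiRho *
          Algebra.TensorProduct.map (AlgHom.id k B) appendOne R.PhiRhoInv) := by
    rw [← mul_assoc, ← R.pentagon_coactLeft, mul_assoc, ← map_mul, R.PhiRho_mul_inv, map_one,
      mul_one]
  have h := congrArg ((Q.contract (AlgHom.id k H)).lTensor B) pentagon_div
  rw [lTensor_map_mul (Q.contract_comulRight_mul (AlgHom.id k H)),
    lTensor_mul_map Q.contract_id_mul_coactLeft_comul, LinearMap.lTensor_tmul, Q.contract_id_Phi,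
    ← Algebra.TensorProduct.one_def, R.map_counitLeft_PhiRho, R.map_counitRight_PhiRho, one_mul,
    one_mul] at h
  exact h.symm

end RightComoduleAlgebra

/-- A linear map `f : B → M` is right invariant along `v : H → B` if it intertwines the right
`H`-action on `B` through `v` with the trivial action on `M`. The canonical projection and all its
left translates have this property. -/
def IsRightInvariant {k H B M : Type*} [Field k] [Ring H] [Algebra k H] [Ring B] [Algebra k B]
    [AddCommMonoid M] [Module k M] (Q : QuasiBialgebra k H) (v : H →ₐ[k] B) (f : B →ₗ[k] M) :
    Prop :=
  ∀ b h, f (b * v h) = Q.counit h • f b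

namespace IsRightInvariant

variable {k H A B M : Type*} [Field k] [Ring H] [Algebra k H] [Ring A] [Algebra k A]
  [Ring B] [Algebra k B] [AddCommMonoid M] [Module k M]

section QuasiBialgebra

variable {Q : QuasiBialgebra k H} {v : H →ₐ[k] B} {f : B →ₗ[k] M} (hf : IsRightInvariant Q v f)

include hf

theorem comp_mulLeft (b : B) : IsRightInvariant Q v (f ∘ₗ LinearMap.mulLeft k b) := fun c h => by
  simp [← mul_assoc, hf _ h]

theorem rTensor_mul_map (t : B ⊗[k] A) (y : H ⊗[k] A) :
    f.rTensor A (t * Algebra.TensorProduct.map v (AlgHom.id k A) y) =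
      f.rTensor A (t * (1 ⊗ₜ[k] Q.counitLeft y)) := by
  induction y with
  | zero => simp
  | add x y hx hy => simp only [map_add, TensorProduct.tmul_add, mul_add, hx, hy]
  | tmul h a =>
    induction t with
    | zero => simp
    | add x y hx hy => simp only [add_mul, map_add, hx, hy]
    | tmul b a' => simp [hf b h, TensorProduct.smul_tmul]

section Morphism

variable {R : RightComoduleAlgebra Q B} (hv : IsComodAlgMorphismFromH R v)

include hv

theorem rTensor_mul_coact (t : B ⊗[k] H) (h : H) :
    f.rTensor H (t * R.coact (v h)) = f.rTensor H (t * (1 ⊗ₜ[k] h)) := by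
  rw [hv.1, hf.rTensor_mul_map, Q.counitLeft_comul]

theorem rTensor_mul_map_PhiRho (g : H ⊗[k] H →ₐ[k] A) (t : B ⊗[k] A) :
    f.rTensor A (t * Algebra.TensorProduct.map (AlgHom.id k B) g R.PhiRho) = f.rTensor A t := by
  have map_PhiRho : Algebra.TensorProduct.map (AlgHom.id k B) g R.PhiRho =
      Algebra.TensorProduct.map v (AlgHom.id k A)
        (Algebra.TensorProduct.map (AlgHom.id k H) g Q.Phi) := by
    rw [hv.2, ← AlgHom.comp_apply, ← AlgHom.comp_apply, ← Algebra.TensorProduct.map_comp,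
      ← Algebra.TensorProduct.map_comp, AlgHom.id_comp, AlgHom.comp_id, AlgHom.id_comp,
      AlgHom.comp_id]
  rw [map_PhiRho, hf.rTensor_mul_map, ← AlgHom.comp_apply, Q.counitLeft_comp_map,
    AlgHom.comp_apply, Q.counitLeft_Phi, map_one, ← Algebra.TensorProduct.one_def, mul_one]

theorem rTensor_mul_PhiRho (t : B ⊗[k] (H ⊗[k] H)) :
    f.rTensor (H ⊗[k] H) (t * R.PhiRho) = f.rTensor (H ⊗[k] H) t := by
  simpa using hf.rTensor_mul_map_PhiRho hv (AlgHom.id k (H ⊗[k] H)) t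

end Morphism

end QuasiBialgebra

variable {Q : QuasiHopfAlgebra k H} {R : RightComoduleAlgebra Q.toQuasiBialgebra B}
  {v : H →ₐ[k] B} {f : B →ₗ[k] M} (hf : IsRightInvariant Q.toQuasiBialgebra v f)

include hf

theorem apply_mul_contract (b : B) (t : B ⊗[k] (H ⊗[k] H)) :
    f (b * Q.contract v t) = f (b * Q.counitRight
      (Algebra.TensorProduct.map (AlgHom.id k B) Q.counitRight t)) := by
  induction t with
  | zero => simp
  | add x y hx hy => simp only [map_add, mul_add, hx, hy]
  | tmul c s => simp [← mul_assoc, hf _ _, Q.counit_antipodePairing]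

theorem rTensor_coact_contract (hv : IsComodAlgMorphismFromH R v) (t : B ⊗[k] (H ⊗[k] H)) :
    f.rTensor H (R.coact (Q.contract v t)) =
      f.rTensor H ((Q.contract (AlgHom.id k H)).lTensor B (coactLeft R.coact t)) := by
  induction t with
  | zero => simp
  | add x y hx hy => simp only [map_add, hx, hy]
  | tmul b s =>
    rw [Q.contract_tmul, map_mul, hf.rTensor_mul_coact hv, coactLeft_tmul]
    congr 1
    induction R.coact b with
    | zero => simp
    | add x y hx hy => simp only [add_mul, TensorProduct.add_tmul, map_add, hx, hy]
    | tmul b₀ b₁ => simp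

end IsRightInvariant

theorem IsComodAlgMorphismFromH.PhiRhoInv_eq {k H B : Type*} [Field k] [Ring H] [Algebra k H]
    [Ring B] [Algebra k B] {Q : QuasiBialgebra k H} {R : RightComoduleAlgebra Q B} {v : H →ₐ[k] B}
    (hv : IsComodAlgMorphismFromH R v) :
    R.PhiRhoInv = Algebra.TensorProduct.map v (AlgHom.id k (H ⊗[k] H)) Q.PhiInv := by
  refine left_inv_eq_right_inv R.inv_mul_PhiRho ?_
  rw [hv.2, ← map_mul, Q.Phi_mul_inv, map_one]

namespace IsCanonicalProjection

variable {k H B M : Type*} [Field k] [Ring H] [Algebra k H] [Ring B] [Algebra k B]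
  [AddCommMonoid M] [Module k M] {Q : QuasiHopfAlgebra k H}
  {R : RightComoduleAlgebra Q.toQuasiBialgebra B} {v : H →ₐ[k] B} {E : B →ₗ[k] B}
  (hE : IsCanonicalProjection Q R v E) (hv : IsComodAlgMorphismFromH R v)

include hE hv

theorem eq_contract (b : B) : E b = Q.contract v (R.PhiRho * appendOne (R.coact b)) := by
  obtain ⟨n, X₁, X₂, X₃, hX⟩ := exists_sum_tmul_tmul_eq Q.Phi
  obtain ⟨m, b₀, b₁, hb⟩ := TensorProduct.exists_sum_tmul_eq (R.coact b)
  rw [hE b n X₁ X₂ X₃ hX m b₀ b₁ hb, hv.2, hX, hb]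
  simp [Finset.sum_mul_sum, Q.S_mul, Q.S_Sinv, mul_assoc]

theorem apply_one : E 1 = 1 := by
  rw [hE.eq_contract hv, map_one, map_one, mul_one, hv.2, Q.contract_map_Phi]

theorem isRightInvariant : IsRightInvariant Q.toQuasiBialgebra v E := fun b h => by
  rw [hE.eq_contract hv, hE.eq_contract hv, map_mul R.coact, map_mul appendOne, hv.1, ← mul_assoc,
    Q.contract_mul_map_comul_appendOne]

section RightInvariant

variable {f : B →ₗ[k] M} (hf : IsRightInvariant Q.toQuasiBialgebra v f)

include hf

theorem rightInvariant_mul_apply (b m : B) : f (b * E m) = f (b * m) := by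
  have map_counitRight_appendOne (s : B ⊗[k] H) :
      Algebra.TensorProduct.map (AlgHom.id k B) Q.counitRight (appendOne s) = s := by
    induction s with
    | zero => simp
    | add x y hx hy => simp only [map_add, hx, hy]
    | tmul c h => simp
  rw [hE.eq_contract hv, hf.apply_mul_contract, map_mul (Algebra.TensorProduct.map _ _),
    R.map_counitRight_PhiRho, one_mul,
    map_counitRight_appendOne, R.counitRight_coact]

theorem rightInvariant_apply (m : B) : f (E m) = f m := by
  simpa using hE.rightInvariant_mul_apply hv hf 1 m

theorem rTensor_coact_apply (m : B) : f.rTensor H (R.coact (E m)) = f m ⊗ₜ[k] 1 := by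
  have rTensor_lTensor_comm (t : B ⊗[k] (H ⊗[k] (H ⊗[k] H))) :
      f.rTensor H ((Q.contract (AlgHom.id k H)).lTensor B t) =
        (Q.contract (AlgHom.id k H)).lTensor M (f.rTensor _ t) := by
    rw [← LinearMap.comp_apply, LinearMap.rTensor_comp_lTensor, ← LinearMap.lTensor_comp_rTensor,
      LinearMap.comp_apply]
  have lTensor_contract_eq : (Q.contract (AlgHom.id k H)).lTensor B
      (coactLeft R.coact R.PhiRho *
        Algebra.TensorProduct.map (AlgHom.id k B) appendOne R.PhiRhoInv *
        Algebra.TensorProduct.map (AlgHom.id k B) appendOne (Q.comulRight (R.coact m))) =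
      m ⊗ₜ[k] 1 := by
    rw [Q.lTensor_contract_mul_appendOne_comulRight,
      R.lTensor_contract_coactLeft_PhiRho_mul_PhiRhoInv, one_mul, R.counitRight_coact]
  rw [hE.eq_contract hv, hf.rTensor_coact_contract hv, R.coactLeft_PhiRho_mul_appendOne_coact,
    rTensor_lTensor_comm, hf.rTensor_mul_map_PhiRho hv, ← rTensor_lTensor_comm,
    lTensor_contract_eq, LinearMap.rTensor_tmul]

theorem rTensor_coact_of_mem_range {a : B} (ha : a ∈ LinearMap.range E) :
    f.rTensor H (R.coact a) = f a ⊗ₜ[k] 1 := by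
  obtain ⟨m, rfl⟩ := ha
  rw [hE.rTensor_coact_apply hv hf, hE.rightInvariant_apply hv hf]

theorem rTensor_coact_mul {a : B} (ha : a ∈ LinearMap.range E) (h : H) :
    f.rTensor H (R.coact (a * v h)) = f a ⊗ₜ[k] h := by
  rw [map_mul, hf.rTensor_mul_coact hv, rTensor_mul_one_tmul,
    hE.rTensor_coact_of_mem_range hv hf ha]
  simp

end RightInvariant

theorem apply_mul_apply (b m : B) : E (b * E m) = E (b * m) :=
  hE.rightInvariant_mul_apply hv (hE.isRightInvariant hv) b m

theorem apply_of_mem_range {a : B} (ha : a ∈ LinearMap.range E) : E a = a := by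
  obtain ⟨m, rfl⟩ := ha
  exact hE.rightInvariant_apply hv (hE.isRightInvariant hv) m

theorem actRight_rTensor (s : B ⊗[k] H) :
    actRight v (E.rTensor H s) = Q.contract v (R.PhiRho * coactLeft R.coact s) := by
  induction s with
  | zero => simp
  | add x y hx hy => simp only [map_add, mul_add, hx, hy]
  | tmul b h =>
    rw [LinearMap.rTensor_tmul, actRight_tmul, hE.eq_contract hv,
      ← Q.contract_mul_one_tmul_one_tmul, mul_assoc, coactLeft_tmul, assoc_tmul_eq_appendOne_mul]

theorem actRight_rTensor_coact_mul (b m : B) :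
    actRight v (E.rTensor H (R.coact b * (m ⊗ₜ[k] 1))) = b * E m := by
  rw [hE.actRight_rTensor hv, map_mul (coactLeft _), coactLeft_tmul_one, ← mul_assoc,
    R.PhiRho_mul_coactLeft_coact, mul_assoc, Q.contract_comulRight_mul, R.counitRight_coact,
    ← hE.eq_contract hv]

theorem actRight_rTensor_coact (b : B) : actRight v (E.rTensor H (R.coact b)) = b := by
  simpa [hE.apply_one hv, ← Algebra.TensorProduct.one_def] using
    hE.actRight_rTensor_coact_mul hv b 1

theorem coact_eq_rTensor_actRight (b : B) :
    R.coact b = (actRight v).rTensor H ((TensorProduct.assoc k B H H).symm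
      (E.rTensor (H ⊗[k] H) (R.PhiRhoInv * Q.comulRight (R.coact b)))) := by
  have coact_section : actRight v ∘ₗ E.rTensor H ∘ₗ R.coact.toLinearMap = LinearMap.id :=
    LinearMap.ext (hE.actRight_rTensor_coact hv)
  have rTensor_coactLeft_coact : E.rTensor (H ⊗[k] H) (coactLeft R.coact (R.coact b)) =
      E.rTensor (H ⊗[k] H) (R.PhiRhoInv * Q.comulRight (R.coact b)) := by
    rw [R.coactLeft_coact, (hE.isRightInvariant hv).rTensor_mul_PhiRho hv]
  rw [← rTensor_coactLeft_coact, rTensor_coactLeft, LinearEquiv.symm_apply_apply,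
    ← LinearMap.comp_apply, ← LinearMap.rTensor_comp, coact_section, LinearMap.rTensor_id,
    LinearMap.id_apply]

section PhiInv

variable {ι : Type*} [Fintype ι] {x₁ x₂ x₃ : ι → H}
  (hx : Q.PhiInv = ∑ i, x₁ i ⊗ₜ[k] (x₂ i ⊗ₜ[k] x₃ i))

include hx

theorem coact_eq_sum {a : B} (ha : a ∈ LinearMap.range E) :
    R.coact a = ∑ i, (E (v (x₁ i) * a) * v (x₂ i)) ⊗ₜ[k] x₃ i := by
  have rTensor_tmul_mul (i : ι) :
      E.rTensor (H ⊗[k] H) ((v (x₁ i) ⊗ₜ[k] (x₂ i ⊗ₜ[k] x₃ i)) * Q.comulRight (R.coact a)) =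
        E (v (x₁ i) * a) ⊗ₜ[k] (x₂ i ⊗ₜ[k] x₃ i) := by
    have rTensor_translate (s : B ⊗[k] H) :
        E.rTensor (H ⊗[k] H) ((v (x₁ i) ⊗ₜ[k] (x₂ i ⊗ₜ[k] x₃ i)) * Q.comulRight s) =
          (LinearMap.mulLeft k (x₂ i ⊗ₜ[k] x₃ i) ∘ₗ Q.comul.toLinearMap).lTensor B
            ((E ∘ₗ LinearMap.mulLeft k (v (x₁ i))).rTensor H s) := by
      induction s with
      | zero => simp
      | add x y hx hy => simp only [map_add, mul_add, hx, hy]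
      | tmul b h => simp
    rw [rTensor_translate, hE.rTensor_coact_of_mem_range hv
      ((hE.isRightInvariant hv).comp_mulLeft (v (x₁ i))) ha]
    simp
  rw [hE.coact_eq_rTensor_actRight hv, hv.PhiRhoInv_eq, hx]
  simp [Finset.sum_mul, rTensor_tmul_mul]

theorem mul_eq_sum {a b : B} (ha : a ∈ LinearMap.range E) (hb : b ∈ LinearMap.range E) :
    a * b = ∑ i, E (E (v (x₁ i) * a) * E (v (x₂ i) * b)) * v (x₃ i) := by
  conv_lhs => rw [← hE.apply_of_mem_range hv hb]
  rw [← hE.actRight_rTensor_coact_mul hv, hE.coact_eq_sum hv hx ha]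
  simp [Finset.sum_mul, mul_assoc, hE.apply_mul_apply hv]

end PhiInv

theorem apply_mul_eq_sum {ι : Type*} [Fintype ι] {X₁ X₂ X₃ : ι → H}
    (hX : Q.Phi = ∑ i, X₁ i ⊗ₜ[k] (X₂ i ⊗ₜ[k] X₃ i)) {a b : B} (ha : a ∈ LinearMap.range E)
    (hb : b ∈ LinearMap.range E) :
    E (a * b) = ∑ i, E (v (X₁ i) * a) * E (v (X₂ i) * b) * v (X₃ i) := by
  obtain ⟨n, x₁, x₂, x₃, hx⟩ := exists_sum_tmul_tmul_eq Q.PhiInv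
  let translate (c : B) : H →ₗ[k] B := E ∘ₗ LinearMap.mulRight k c ∘ₗ v.toLinearMap
  let starTranslates : H ⊗[k] (H ⊗[k] H) →ₗ[k] B :=
    actRight v ∘ₗ (E ∘ₗ LinearMap.mul' k B ∘ₗ
      TensorProduct.map (translate a) (translate b)).rTensor H ∘ₗ
        (TensorProduct.assoc k H H H).symm.toLinearMap
  have starTranslates_tmul (p q r : H) : starTranslates (p ⊗ₜ[k] (q ⊗ₜ[k] r)) =
      E (E (v p * a) * E (v q * b)) * v r := rfl
  have mul_translates (i) : E (v (X₁ i) * a) * E (v (X₂ i) * b) * v (X₃ i) =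
      starTranslates (Q.PhiInv * X₁ i ⊗ₜ[k] (X₂ i ⊗ₜ[k] X₃ i)) := by
    rw [hE.mul_eq_sum hv hx ⟨_, rfl⟩ ⟨_, rfl⟩, hx]
    simp [Finset.sum_mul, starTranslates_tmul, hE.apply_mul_apply hv, mul_assoc]
  calc E (a * b) = starTranslates (Q.PhiInv * Q.Phi) := by
        simp [Q.inv_mul_Phi, Algebra.TensorProduct.one_def, starTranslates_tmul,
          hE.apply_of_mem_range hv ha, hE.apply_of_mem_range hv hb]
    _ = _ := by simp only [mul_translates, hX, Finset.mul_sum, map_sum]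

theorem assoc_eq_sum {ι : Type*} [Fintype ι] {X₁ X₂ X₃ : ι → H}
    (hX : Q.Phi = ∑ i, X₁ i ⊗ₜ[k] (X₂ i ⊗ₜ[k] X₃ i)) {a b : B} (ha : a ∈ LinearMap.range E)
    (hb : b ∈ LinearMap.range E) (c : B) :
    E (E (a * b) * c) =
      ∑ i, E (E (v (X₁ i) * a) * E (E (v (X₂ i) * b) * E (v (X₃ i) * c))) := by
  rw [hE.apply_mul_eq_sum hv hX ha hb]
  simp [Finset.sum_mul, hE.apply_mul_apply hv, mul_assoc]

theorem act_one (h : H) : E (v h * 1) = Q.counit h • 1 := by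
  simpa [hE.apply_one hv] using hE.isRightInvariant hv 1 h

section Comul

variable {ι : Type*} [Fintype ι] {h : H} {d₁ d₂ : ι → H} (hd : Q.comul h = ∑ j, d₁ j ⊗ₜ[k] d₂ j)

include hd

theorem map_mul_apply_eq_sum (m : B) : v h * E m = ∑ j, E (v (d₁ j) * m) * v (d₂ j) := by
  rw [← hE.actRight_rTensor_coact_mul hv, hv.1, hd]
  simp [Finset.sum_mul]

theorem act_mul_eq_sum {a : B} (ha : a ∈ LinearMap.range E) (b : B) :
    E (v h * E (a * b)) = ∑ j, E (E (v (d₁ j) * a) * E (v (d₂ j) * b)) := by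
  rw [hE.apply_mul_apply hv, ← mul_assoc]
  conv_lhs => rw [← hE.apply_of_mem_range hv ha, hE.map_mul_apply_eq_sum hv hd]
  simp [Finset.sum_mul, hE.apply_mul_apply hv, mul_assoc]

variable {κ : Type*} [Fintype κ] {x₁ x₂ x₃ : κ → H}
  (hx : Q.PhiInv = ∑ i, x₁ i ⊗ₜ[k] (x₂ i ⊗ₜ[k] x₃ i))

include hx

theorem sum_smash_mul_eq {a a' : B} (ha : a ∈ LinearMap.range E) (ha' : a' ∈ LinearMap.range E)
    (h' : H) :
    ∑ i, ∑ j, E (E (v (x₁ i) * a) * E (v (x₂ i * d₁ j) * a')) * v (x₃ i * d₂ j * h') =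
      a * v h * (a' * v h') := by
  have mul_translate (j : ι) : a * E (v (d₁ j) * a') =
      ∑ i, E (E (v (x₁ i) * a) * E (v (x₂ i * d₁ j) * a')) * v (x₃ i) := by
    rw [hE.mul_eq_sum hv hx ha ⟨_, rfl⟩]
    simp [hE.apply_mul_apply hv, mul_assoc]
  calc _ = ∑ j, a * E (v (d₁ j) * a') * v (d₂ j) * v h' := by
        rw [Finset.sum_comm]
        simp [mul_translate, Finset.sum_mul, mul_assoc]
    _ = a * (v h * E a') * v h' := by
        rw [hE.map_mul_apply_eq_sum hv hd]
        simp [Finset.sum_mul, Finset.mul_sum, mul_assoc]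
    _ = a * v h * (a' * v h') := by rw [hE.apply_of_mem_range hv ha']; simp only [mul_assoc]

theorem coact_mul_eq_sum {a : B} (ha : a ∈ LinearMap.range E) :
    R.coact (a * v h) =
      ∑ i, ∑ j, (E (v (x₁ i) * a) * v (x₂ i * d₁ j)) ⊗ₜ[k] (x₃ i * d₂ j) := by
  rw [map_mul, hE.coact_eq_sum hv hx ha, hv.1, hd]
  simp [Finset.sum_mul_sum, mul_assoc]

end Comul

theorem isRightInvariant_rangeRestrict :
    IsRightInvariant Q.toQuasiBialgebra v E.rangeRestrict := fun b h =>
  Subtype.ext (hE.isRightInvariant hv b h)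

theorem bijective_smashToB : Function.Bijective (smashToB E v) := by
  refine Function.bijective_iff_has_inverse.2
    ⟨fun b => E.rangeRestrict.rTensor H (R.coact b), fun s => ?_, fun b => ?_⟩
  · dsimp only
    induction s with
    | zero => simp
    | add x y hx hy => simp only [map_add, hx, hy]
    | tmul a h =>
      have rangeRestrict_apply : E.rangeRestrict a = a :=
        Subtype.ext (hE.apply_of_mem_range hv a.2)
      rw [smashToB_eq_actRight, LinearMap.rTensor_tmul, actRight_tmul, Submodule.subtype_apply,
        hE.rTensor_coact_mul hv (hE.isRightInvariant_rangeRestrict hv) a.2, rangeRestrict_apply]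
  · dsimp only
    rw [smashToB_eq_actRight, ← LinearMap.rTensor_comp_apply, LinearMap.subtype_comp_codRestrict,
      hE.actRight_rTensor_coact hv]

end IsCanonicalProjection

/-- The structure theorem for quasi-Hopf comodule algebras: with `A = E(B)`,
`a * a' = E(aa')`, `1_A = 1_B` and `h ▷ a = E(v(h)a)`, the quadruple `(A, *, 1, ▷)` is a
left `H`-module algebra, and `Ψ : A # H → B`, `Ψ(a # h) = a v(h)`, is an isomorphism of
right `H`-comodule algebras; in particular `B ≅ A # H`. -/
theorem statement4 {k H B : Type*} [Field k] [Ring H] [Algebra k H]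
    [Ring B] [Algebra k B] (Q : QuasiHopfAlgebra k H)
    (R : RightComoduleAlgebra Q.toQuasiBialgebra B)
    (v : H →ₐ[k] B) (hv : IsComodAlgMorphismFromH R v)
    (E : B →ₗ[k] B) (hE : IsCanonicalProjection Q R v E) :
    -- `1_B ∈ A` and `(A, *, 1_B, ▷)` is a left `H`-module algebra:
    (E 1 = 1)
    ∧ (∀ a ∈ LinearMap.range E, E (v 1 * a) = a)
    ∧ (∀ (g h : H), ∀ a ∈ LinearMap.range E, E (v (g * h) * a) = E (v g * E (v h * a)))
    ∧ (∀ a ∈ LinearMap.range E, E (a * 1) = a ∧ E ((1 : B) * a) = a)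
    ∧ (∀ h : H, E (v h * 1) = Q.counit h • (1 : B))
    ∧ (∀ a ∈ LinearMap.range E, ∀ b ∈ LinearMap.range E, ∀ c ∈ LinearMap.range E,
        ∀ (n : ℕ) (X1 X2 X3 : Fin n → H),
        Q.Phi = ∑ i, X1 i ⊗ₜ[k] (X2 i ⊗ₜ[k] X3 i) →
        E (E (a * b) * c)
          = ∑ i, E (E (v (X1 i) * a) * E (E (v (X2 i) * b) * E (v (X3 i) * c))))
    ∧ (∀ (h : H), ∀ a ∈ LinearMap.range E, ∀ b ∈ LinearMap.range E,
        ∀ (m : ℕ) (d1 d2 : Fin m → H),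
        Q.comul h = ∑ j, d1 j ⊗ₜ[k] d2 j →
        E (v h * E (a * b)) = ∑ j, E (E (v (d1 j) * a) * E (v (d2 j) * b)))
    -- `Ψ` is an isomorphism of right `H`-comodule algebras:
    ∧ Function.Bijective (smashToB E v)
    ∧ (∀ a ∈ LinearMap.range E, ∀ a' ∈ LinearMap.range E, ∀ (h h' : H)
        (n : ℕ) (x1 x2 x3 : Fin n → H),
        Q.PhiInv = ∑ i, x1 i ⊗ₜ[k] (x2 i ⊗ₜ[k] x3 i) →
        ∀ (m : ℕ) (d1 d2 : Fin m → H), Q.comul h = ∑ j, d1 j ⊗ₜ[k] d2 j →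
        (∑ i, ∑ j, E (E (v (x1 i) * a) * E (v (x2 i * d1 j) * a'))
            * v (x3 i * d2 j * h'))
          = a * v h * (a' * v h'))
    ∧ (∀ a ∈ LinearMap.range E, ∀ (h : H) (n : ℕ) (x1 x2 x3 : Fin n → H),
        Q.PhiInv = ∑ i, x1 i ⊗ₜ[k] (x2 i ⊗ₜ[k] x3 i) →
        ∀ (m : ℕ) (d1 d2 : Fin m → H), Q.comul h = ∑ j, d1 j ⊗ₜ[k] d2 j →
        R.coact (a * v h)
          = ∑ i, ∑ j, (E (v (x1 i) * a) * v (x2 i * d1 j)) ⊗ₜ[k] (x3 i * d2 j))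
    ∧ R.PhiRho = (Algebra.TensorProduct.map v (AlgHom.id k (H ⊗[k] H))) Q.Phi := by
  refine ⟨hE.apply_one hv, fun a ha => ?_, fun g h a _ => ?_, fun a ha => ⟨?_, ?_⟩,
    hE.act_one hv, fun a ha b hb c _ _ _ _ _ hX => hE.assoc_eq_sum hv hX ha hb c,
    fun _ a ha b _ _ _ _ hd => hE.act_mul_eq_sum hv hd ha b, hE.bijective_smashToB hv,
    fun a ha a' ha' _ h' _ _ _ _ hx _ _ _ hd => hE.sum_smash_mul_eq hv hd hx ha ha' h',
    fun a ha _ _ _ _ _ hx _ _ _ hd => hE.coact_mul_eq_sum hv hd hx ha, hv.2⟩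
  · rw [map_one, one_mul, hE.apply_of_mem_range hv ha]
  · rw [hE.apply_mul_apply hv, map_mul v, mul_assoc]
  · rw [mul_one, hE.apply_of_mem_range hv ha]
  · rw [one_mul, hE.apply_of_mem_range hv ha]
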